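/- Let (X,d,𝔪) be a PI space with 𝔪(X) = ∞, and let E ⊂ X be an indecomposable set. Then any hole of E is saturated. -/

import Mathlib

open MeasureTheory Metric Filter Set ENNReal NNReal Topology

/-- A curve: a rectifiable continuous map from a compact interval into `X`,
parametrized by arc length (hence `1`-Lipschitz on `[0, len]`). -/
structure Curve (X : Type*) [MetricSpace X] where
  len : ℝ
  len_nonneg : 0 ≤ len
  toFun : ℝ → X
  lipschitzOn : LipschitzOnWith 1 toFun (Set.Icc 0 len)

namespace Curve

variable {X : Type*} [MetricSpace X]

/-- A curve is nonconstant if it attains two distinct values. -/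
def IsNonconstant (γ : Curve X) : Prop :=
  ∃ s ∈ Set.Icc (0:ℝ) γ.len, ∃ t ∈ Set.Icc (0:ℝ) γ.len, γ.toFun s ≠ γ.toFun t

/-- A curve lies in a set `W`. -/
def IsIn (γ : Curve X) (W : Set X) : Prop :=
  ∀ s ∈ Set.Icc (0:ℝ) γ.len, γ.toFun s ∈ W

end Curve

variable {X : Type*} [MetricSpace X] [MeasurableSpace X] [BorelSpace X]

/-- The curve integral `∫_γ g ds` for an arc-length parametrized curve. -/
noncomputable def curveLintegral (g : X → ℝ≥0∞) (γ : Curve X) : ℝ≥0∞ :=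
  ∫⁻ s in Set.Icc (0:ℝ) γ.len, g (γ.toFun s)

/-- The upper gradient inequality `|u(x) - u(y)| ≤ ∫_γ g ds` along a curve `γ`
with endpoints `x, y`. -/
def UpperGradIneq (g : X → ℝ≥0∞) (u : X → ℝ) (γ : Curve X) : Prop :=
  ENNReal.ofReal |u (γ.toFun 0) - u (γ.toFun γ.len)| ≤ curveLintegral g γ

/-- The 1-modulus of a family of curves. -/
noncomputable def mod1 (μ : Measure X) (Γ : Set (Curve X)) : ℝ≥0∞ :=
  ⨅ (ρ : X → ℝ≥0∞) (_ : Measurable ρ ∧ ∀ γ ∈ Γ, 1 ≤ curveLintegral ρ γ),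
    ∫⁻ x, ρ x ∂μ

/-- `g` is a 1-weak upper gradient of `u` in `W`: the upper gradient inequality
holds for all nonconstant curves in `W` outside a family of 1-modulus zero. -/
def IsWeakUpperGradientOn (μ : Measure X) (g : X → ℝ≥0∞) (u : X → ℝ) (W : Set X) : Prop :=
  Measurable g ∧
    mod1 μ {γ : Curve X | γ.IsNonconstant ∧ γ.IsIn W ∧ ¬ UpperGradIneq g u γ} = 0

/-- `g` is a (strong) upper gradient of `u` in `X`. -/
def IsUpperGradient (g : X → ℝ≥0∞) (u : X → ℝ) : Prop :=
  Measurable g ∧ ∀ γ : Curve X, γ.IsNonconstant → UpperGradIneq g u γ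

/-- `∫_W g_u dμ`: the integral over `W` of the minimal 1-weak upper gradient of `u`
in `W`, equivalently the infimum of `∫_W g dμ` over all 1-weak upper gradients `g`
of `u` in `W`. -/
noncomputable def gradEnergy (μ : Measure X) (u : X → ℝ) (W : Set X) : ℝ≥0∞ :=
  ⨅ (g : X → ℝ≥0∞) (_ : IsWeakUpperGradientOn μ g u W), ∫⁻ x in W, g x ∂μ

/-- `u` is locally Lipschitz on `W`. -/
def LocLipschitzOn (u : X → ℝ) (W : Set X) : Prop :=
  ∀ x ∈ W, ∃ K : ℝ≥0, ∃ t ∈ nhdsWithin x W, LipschitzOnWith K u t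

/-- Convergence `uᵢ → v` in `L¹_loc(W)`. -/
def TendstoL1loc (μ : Measure X) (W : Set X) (u : ℕ → X → ℝ) (v : X → ℝ) : Prop :=
  ∀ W' : Set X, IsOpen W' → IsCompact (closure W') → closure W' ⊆ W →
    Tendsto (fun i => ∫⁻ x in W', ENNReal.ofReal |u i x - v x| ∂μ) atTop (𝓝 0)

/-- The total variation `‖Dv‖(W)` of a function `v` in an open set `W`. -/
noncomputable def variationOn (μ : Measure X) (v : X → ℝ) (W : Set X) : ℝ≥0∞ :=
  ⨅ (u : ℕ → X → ℝ) (_ : (∀ i, LocLipschitzOn (u i) W) ∧ TendstoL1loc μ W u v),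
    Filter.liminf (fun i => gradEnergy μ (u i) W) Filter.atTop

/-- The total variation `‖Dv‖(A)` of a function `v` in an arbitrary set `A`. -/
noncomputable def totalVar (μ : Measure X) (v : X → ℝ) (A : Set X) : ℝ≥0∞ :=
  ⨅ (W : Set X) (_ : IsOpen W ∧ A ⊆ W), variationOn μ v W

/-- The perimeter `P(E, A) = ‖Dχ_E‖(A)`. -/
noncomputable def perimeter (μ : Measure X) (E A : Set X) : ℝ≥0∞ :=
  totalVar μ (Set.indicator E fun _ => (1 : ℝ)) A

/-- The measure `μ` is doubling. -/
def IsDoublingMeasure (μ : Measure X) : Prop :=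
  ∃ C : ℝ≥0∞, 1 ≤ C ∧ ∀ (x : X) (r : ℝ), 0 < r → μ (ball x (2 * r)) ≤ C * μ (ball x r)

/-- The space supports a (1,1)-Poincaré inequality:
`⨍_{B(x,r)} |u - u_{B(x,r)}| dμ ≤ C r ⨍_{B(x,λr)} g dμ` for every ball, every
`u ∈ L¹_loc(X)` and every upper gradient `g` of `u` (stated here multiplied
through by the measures of the two balls). -/
def SupportsPoincare (μ : Measure X) : Prop :=
  ∃ C lam : ℝ, 0 < C ∧ 1 ≤ lam ∧
    ∀ (x : X) (r : ℝ), 0 < r → ∀ (u : X → ℝ) (g : X → ℝ≥0∞),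
      (∀ (y : X) (s : ℝ), IntegrableOn u (ball y s) μ) → IsUpperGradient g u →
        μ (ball x (lam * r)) *
            ∫⁻ y in ball x r, ENNReal.ofReal |u y - ⨍ z in ball x r, u z ∂μ| ∂μ ≤
          ENNReal.ofReal (C * r) * μ (ball x r) * ∫⁻ y in ball x (lam * r), g y ∂μ

/-- `(X, d, μ)` is a PI space: complete, doubling, supporting a (1,1)-Poincaré
inequality. -/
def IsPISpace (μ : Measure X) : Prop :=
  CompleteSpace X ∧ IsDoublingMeasure μ ∧ SupportsPoincare μ

/-- A set `E` of finite perimeter is decomposable in a Borel set `D` if there is a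
partition `{F, G}` of `E ∩ D` into sets of finite perimeter in `D`, both of positive
measure, with `P(E,D) = P(F,D) + P(G,D)`. -/
def IsDecomposableIn (μ : Measure X) (E D : Set X) : Prop :=
  ∃ F G : Set X, MeasurableSet F ∧ MeasurableSet G ∧ Disjoint F G ∧ F ∪ G = E ∩ D ∧
    perimeter μ F D < ⊤ ∧ perimeter μ G D < ⊤ ∧ 0 < μ F ∧ 0 < μ G ∧
    perimeter μ E D = perimeter μ F D + perimeter μ G D

/-- `E` is indecomposable in `D`. -/
def IsIndecomposableIn (μ : Measure X) (E D : Set X) : Prop :=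
  ¬ IsDecomposableIn μ E D

/-- `{F i}_{i ∈ I}` is a (finite or countable) partition of `E` into indecomposable
Borel sets of positive measure and finite perimeter whose perimeters sum to `P(E,X)`;
this is the defining property of the essential connected components `𝒞𝒞ᵉ(E)`. -/
def IsEssentialPartition (μ : Measure X) (E : Set X) (I : Set ℕ) (F : ℕ → Set X) : Prop :=
  (∀ i ∈ I, MeasurableSet (F i)) ∧
  (∀ i ∈ I, ∀ j ∈ I, i ≠ j → Disjoint (F i) (F j)) ∧
  (⋃ i ∈ I, F i) = E ∧
  (∀ i ∈ I, 0 < μ (F i)) ∧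
  (∀ i ∈ I, perimeter μ (F i) Set.univ < ⊤) ∧
  (∀ i ∈ I, IsIndecomposableIn μ (F i) Set.univ) ∧
  perimeter μ E Set.univ = ∑' i : I, perimeter μ (F i.1) Set.univ

/-- Given a decomposition `{G i}_{i ∈ I}` of `X ∖ E` into essential connected
components, the saturation of `E`: the union of `E` and its holes, i.e. the
components of finite measure. -/
def saturationOf (μ : Measure X) (E : Set X) (I : Set ℕ) (G : ℕ → Set X) : Set X :=
  E ∪ ⋃ (i : ℕ) (_ : i ∈ I ∧ μ (G i) < ⊤), G i

/-- The measure-theoretic boundary `∂* E`: points where both `E` and its complement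
have strictly positive upper density. -/
def mtBoundary (μ : Measure X) (E : Set X) : Set X :=
  {x : X |
    0 < Filter.limsup (fun r => μ (ball x r ∩ E) / μ (ball x r)) (nhdsWithin 0 (Set.Ioi 0)) ∧
    0 < Filter.limsup (fun r => μ (ball x r \ E) / μ (ball x r)) (nhdsWithin 0 (Set.Ioi 0))}

/-- The restricted codimension-one Hausdorff content `ℋ_R`. -/
noncomputable def codimOneContent (μ : Measure X) (R : ℝ) (A : Set X) : ℝ≥0∞ :=
  ⨅ (s : Set (X × ℝ))
    (_ : s.Countable ∧ (∀ p ∈ s, 0 < p.2 ∧ p.2 ≤ R) ∧ A ⊆ ⋃ p ∈ s, ball p.1 p.2),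
    ∑' p : s, μ (ball (p : X × ℝ).1 (p : X × ℝ).2) / ENNReal.ofReal (p : X × ℝ).2

/-- The codimension-one Hausdorff measure `ℋ(A) = lim_{R → 0} ℋ_R(A)`. -/
noncomputable def codimOneHausdorff (μ : Measure X) (A : Set X) : ℝ≥0∞ :=
  ⨆ (R : ℝ) (_ : 0 < R), codimOneContent μ R A

section Line

theorem ae_ofReal_abs_deriv_le {f : ℝ → ℝ} {L : ℝ} (hL : 0 ≤ L) {p : ℝ → ℝ≥0∞}
    (hp : AEMeasurable p (volume.restrict (Icc 0 L))) (hfin : ∫⁻ s in Icc 0 L, p s ≠ ⊤)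
    (hfp : ∀ a b, 0 ≤ a → a ≤ b → b ≤ L →
      ENNReal.ofReal |f a - f b| ≤ ∫⁻ s in Icc a b, p s) :
    ∀ᵐ t : ℝ, t ∈ Ioo 0 L → DifferentiableAt ℝ f t → ENNReal.ofReal |deriv f t| ≤ p t := by
  have hint : IntegrableOn (fun s => (p s).toReal) (Icc 0 L) := integrable_toReal_of_lintegral_ne_top hp hfin
  have hii : IntervalIntegrable (fun s => (p s).toReal) volume 0 L :=
    (intervalIntegrable_iff_integrableOn_Icc_of_le hL).2 hint
  have key : ∀ a b, 0 ≤ a → a ≤ b → b ≤ L → |f a - f b| ≤ ∫ s in a..b, (p s).toReal := by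
    intro a b ha hab hb
    have hsub : Icc a b ⊆ Icc 0 L := Icc_subset_Icc ha hb
    have hpab : AEMeasurable p (volume.restrict (Icc a b)) := hp.mono_set hsub
    have hfab : ∫⁻ s in Icc a b, p s ≠ ⊤ := ne_top_of_le_ne_top hfin (lintegral_mono_set hsub)
    rw [intervalIntegral.integral_of_le hab, ← integral_Icc_eq_integral_Ioc,
      integral_toReal hpab (ae_lt_top' hpab hfab)]
    exact (ENNReal.ofReal_le_iff_le_toReal hfab).1 (hfp a b ha hab hb)
  filter_upwards [hii.ae_hasDerivAt_integral] with t ht htI hdiff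
  rw [uIcc_of_le hL] at ht
  have hD := ht (Ioo_subset_Icc_self htI) 0 (left_mem_Icc.2 hL)
  have h1 := (hasDerivAt_iff_tendsto_slope.1 hdiff.hasDerivAt).abs
  have h2 := (hasDerivAt_iff_tendsto_slope.1 hD).abs
  have hle : |deriv f t| ≤ |(p t).toReal| := by
    refine le_of_tendsto_of_tendsto h1 h2 ?_
    have hnear : ∀ᶠ x in 𝓝[≠] t, x ∈ Icc 0 L :=
      mem_nhdsWithin_of_mem_nhds (Icc_mem_nhds htI.1 htI.2)
    filter_upwards [hnear] with x hx
    simp only [slope_def_field, abs_div]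
    refine div_le_div_of_nonneg_right ?_ (abs_nonneg _)
    have hi : ∀ y ∈ Icc 0 L, IntervalIntegrable (fun s => (p s).toReal) volume 0 y := fun y hy =>
      hii.mono_set (by rw [uIcc_of_le hL, uIcc_of_le hy.1]; exact Icc_subset_Icc le_rfl hy.2)
    rw [intervalIntegral.integral_interval_sub_left (hi x hx) (hi t (Ioo_subset_Icc_self htI))]
    rcases le_total t x with htx | hxt
    · rw [abs_sub_comm]
      exact (key t x htI.1.le htx hx.2).trans (le_abs_self _)
    · rw [intervalIntegral.integral_symm, abs_neg]
      exact (key x t hx.1 hxt htI.2.le).trans (le_abs_self _)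
  rw [abs_of_nonneg ENNReal.toReal_nonneg] at hle
  exact (ENNReal.ofReal_le_ofReal hle).trans ENNReal.ofReal_toReal_le

theorem ofReal_abs_sub_le_lintegral_of_deriv_le {h : ℝ → ℝ} {L : ℝ} (hL : 0 ≤ L) {K : ℝ≥0}
    (hh : LipschitzOnWith K h (Icc 0 L)) {r : ℝ → ℝ≥0∞}
    (hr : ∀ᵐ t : ℝ, t ∈ Ioo 0 L → ENNReal.ofReal |deriv h t| ≤ r t) :
    ENNReal.ofReal |h 0 - h L| ≤ ∫⁻ s in Icc 0 L, r s := by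
  have hac : AbsolutelyContinuousOnInterval h 0 L := by
    apply LipschitzOnWith.absolutelyContinuousOnInterval (K := K)
    rwa [uIcc_of_le hL]
  rw [abs_sub_comm, ← hac.integral_deriv_eq_sub, intervalIntegral.integral_of_le hL,
    integral_Ioc_eq_integral_Ioo, ← Real.norm_eq_abs, ofReal_norm]
  refine (enorm_integral_le_lintegral_enorm _).trans
    ((lintegral_mono_ae ?_).trans (lintegral_mono_set Ioo_subset_Icc_self))
  rw [ae_restrict_iff' measurableSet_Ioo]
  filter_upwards [hr] with t ht htI
  simpa [Real.enorm_eq_ofReal_abs] using ht htI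

theorem ofReal_abs_sub_le_lintegral_of_isLocalExtr {f k h : ℝ → ℝ} {L : ℝ} (hL : 0 ≤ L)
    {K₁ K₂ K₃ : ℝ≥0} (hf : LipschitzOnWith K₁ f (Icc 0 L)) (hk : LipschitzOnWith K₂ k (Icc 0 L))
    (hh : LipschitzOnWith K₃ h (Icc 0 L)) {p q r : ℝ → ℝ≥0∞}
    (hp : AEMeasurable p (volume.restrict (Icc 0 L))) (hpfin : ∫⁻ s in Icc 0 L, p s ≠ ⊤)
    (hfp : ∀ a b, 0 ≤ a → a ≤ b → b ≤ L →
      ENNReal.ofReal |f a - f b| ≤ ∫⁻ s in Icc a b, p s)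
    (hq : AEMeasurable q (volume.restrict (Icc 0 L))) (hqfin : ∫⁻ s in Icc 0 L, q s ≠ ⊤)
    (hkq : ∀ a b, 0 ≤ a → a ≤ b → b ≤ L →
      ENNReal.ofReal |k a - k b| ≤ ∫⁻ s in Icc a b, q s)
    (hr : ∀ t ∈ Ioo 0 L, (IsLocalExtr (fun s => f s - h s) t ∧ r t = p t) ∨
      (IsLocalExtr (fun s => k s - h s) t ∧ r t = q t)) :
    ENNReal.ofReal |h 0 - h L| ≤ ∫⁻ s in Icc 0 L, r s := by
  have hd : ∀ {w : ℝ → ℝ} {K : ℝ≥0}, LipschitzOnWith K w (Icc 0 L) →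
      ∀ᵐ t : ℝ, t ∈ Icc 0 L → DifferentiableAt ℝ w t := fun {w K} hw => by
    have := (LipschitzOnWith.absolutelyContinuousOnInterval (K := K) (a := 0) (b := L) (f := w)
      (by rwa [uIcc_of_le hL])).ae_differentiableAt
    rwa [uIcc_of_le hL] at this
  refine ofReal_abs_sub_le_lintegral_of_deriv_le hL hh ?_
  filter_upwards [hd hf, hd hk, hd hh, ae_ofReal_abs_deriv_le hL hp hpfin hfp,
    ae_ofReal_abs_deriv_le hL hq hqfin hkq] with t h1 h2 h3 h4 h5 ht
  have ht' := Ioo_subset_Icc_self ht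
  rcases hr t ht with ⟨he, hrt⟩ | ⟨he, hrt⟩
  · have := he.deriv_eq_zero
    rw [deriv_fun_sub (h1 ht') (h3 ht'), sub_eq_zero] at this
    rw [hrt, ← this]
    exact h4 ht (h1 ht')
  · have := he.deriv_eq_zero
    rw [deriv_fun_sub (h2 ht') (h3 ht'), sub_eq_zero] at this
    rw [hrt, ← this]
    exact h5 ht (h2 ht')

end Line

set_option linter.unusedSectionVars false

section UpperGradient

theorem Curve.continuousOn (γ : Curve X) : ContinuousOn γ.toFun (Icc 0 γ.len) :=
  γ.lipschitzOn.continuousOn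

theorem Curve.aemeasurable (γ : Curve X) :
    AEMeasurable γ.toFun (volume.restrict (Icc 0 γ.len)) :=
  γ.continuousOn.aemeasurable measurableSet_Icc

/-- The restriction of a curve to a subinterval `[a, b]`. -/
def Curve.sub (γ : Curve X) (a b : ℝ) (ha : 0 ≤ a) (hab : a ≤ b) (hb : b ≤ γ.len) : Curve X where
  len := b - a
  len_nonneg := sub_nonneg.2 hab
  toFun s := γ.toFun (a + s)
  lipschitzOn := by
    intro s hs t ht
    have h := γ.lipschitzOn (x := a + s) ⟨by linarith [hs.1], by linarith [hs.2]⟩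
      (y := a + t) ⟨by linarith [ht.1], by linarith [ht.2]⟩
    simpa [edist_add_left] using h

theorem curveLintegral_sub (g : X → ℝ≥0∞) (γ : Curve X) (a b : ℝ) (ha : 0 ≤ a) (hab : a ≤ b)
    (hb : b ≤ γ.len) :
    curveLintegral g (γ.sub a b ha hab hb) = ∫⁻ s in Icc a b, g (γ.toFun s) := by
  have h := (measurePreserving_add_left volume a).setLIntegral_comp_preimage_emb
    (MeasurableEquiv.addLeft a).measurableEmbedding (fun s => g (γ.toFun s)) (Icc a b)
  rw [← h]
  simp [curveLintegral, Curve.sub]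

theorem curveLintegral_tsum {ρ : ℕ → X → ℝ≥0∞} (hρ : ∀ n, Measurable (ρ n)) (γ : Curve X) :
    curveLintegral (fun x => ∑' n, ρ n x) γ = ∑' n, curveLintegral (ρ n) γ :=
  lintegral_tsum fun n => (hρ n).comp_aemeasurable γ.aemeasurable

theorem curveLintegral_add {g : X → ℝ≥0∞} (hg : Measurable g) (ρ : X → ℝ≥0∞) (γ : Curve X) :
    curveLintegral (fun x => g x + ρ x) γ = curveLintegral g γ + curveLintegral ρ γ :=
  lintegral_add_left' (hg.comp_aemeasurable γ.aemeasurable) _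

theorem curveLintegral_const_mul {g : X → ℝ≥0∞} (hg : Measurable g) (c : ℝ≥0∞) (γ : Curve X) :
    curveLintegral (fun x => c * g x) γ = c * curveLintegral g γ :=
  lintegral_const_mul'' _ (hg.comp_aemeasurable γ.aemeasurable)

theorem exists_curveLintegral_eq_top_of_mod1_eq_zero {μ : Measure X} {Γ : Set (Curve X)}
    (h : mod1 μ Γ = 0) {ε : ℝ≥0∞} (hε : ε ≠ 0) :
    ∃ ρ : X → ℝ≥0∞, Measurable ρ ∧ (∀ γ ∈ Γ, curveLintegral ρ γ = ⊤) ∧ ∫⁻ x, ρ x ∂μ < ε := by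
  obtain ⟨δ, hδ, hsum⟩ := ENNReal.exists_pos_sum_of_countable' hε ℕ
  have hex : ∀ n, ∃ ρ : X → ℝ≥0∞, (Measurable ρ ∧ ∀ γ ∈ Γ, 1 ≤ curveLintegral ρ γ) ∧
      ∫⁻ x, ρ x ∂μ < δ n := fun n => by
    have : mod1 μ Γ < δ n := h ▸ hδ n
    simpa only [mod1, iInf_lt_iff, exists_prop] using this
  choose ρ hρ hlt using hex
  refine ⟨fun x => ∑' n, ρ n x, Measurable.tsum fun n => (hρ n).1, fun γ hγ => ?_, ?_⟩
  · rw [curveLintegral_tsum fun n => (hρ n).1, ← top_le_iff]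
    calc (⊤ : ℝ≥0∞) = ∑' _ : ℕ, 1 := (ENNReal.tsum_const_eq_top_of_ne_zero one_ne_zero).symm
      _ ≤ _ := ENNReal.tsum_le_tsum fun n => (hρ n).2 γ hγ
  · rw [lintegral_tsum fun n => (hρ n).1.aemeasurable]
    exact (ENNReal.tsum_le_tsum fun n => (hlt n).le).trans_lt hsum

theorem exists_isUpperGradient_lintegral_lt {μ : Measure X} {u : X → ℝ} {c : ℝ≥0∞}
    (h : gradEnergy μ u univ < c) :
    ∃ g : X → ℝ≥0∞, IsUpperGradient g u ∧ ∫⁻ x, g x ∂μ < c := by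
  simp only [gradEnergy, iInf_lt_iff, exists_prop, Measure.restrict_univ] at h
  obtain ⟨g, ⟨hgm, hg⟩, hlt⟩ := h
  obtain ⟨ρ, hρm, hρ, hρlt⟩ := exists_curveLintegral_eq_top_of_mod1_eq_zero hg
    (tsub_pos_of_lt hlt).ne'
  refine ⟨fun x => g x + ρ x, ⟨hgm.add hρm, fun γ hγ => ?_⟩, ?_⟩
  · rw [UpperGradIneq, curveLintegral_add hgm]
    by_cases hb : UpperGradIneq g u γ
    · exact hb.trans le_self_add
    · rw [hρ γ ⟨hγ, fun _ _ => mem_univ _, hb⟩]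
      simp
  · rw [lintegral_add_left hgm]
    exact (ENNReal.add_lt_add_left hlt.ne_top hρlt).trans_eq (add_tsub_cancel_of_le hlt.le)

theorem gradEnergy_le_of_isUpperGradient {μ : Measure X} {u : X → ℝ} {g : X → ℝ≥0∞}
    (hg : IsUpperGradient g u) : gradEnergy μ u univ ≤ ∫⁻ x, g x ∂μ := by
  refine (iInf₂_le g ⟨hg.1, ?_⟩).trans_eq (by rw [Measure.restrict_univ])
  refine le_antisymm ((iInf₂_le (fun _ => 0) ⟨measurable_const, ?_⟩).trans (by simp)) bot_le
  rintro γ ⟨hγ, -, hn⟩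
  exact (hn (hg.2 γ hγ)).elim

theorem IsUpperGradient.upperGradIneq {u : X → ℝ} {g : X → ℝ≥0∞} (hg : IsUpperGradient g u)
    (γ : Curve X) : UpperGradIneq g u γ := by
  by_cases hγ : γ.IsNonconstant
  · exact hg.2 γ hγ
  · have : γ.toFun 0 = γ.toFun γ.len := by
      by_contra h
      exact hγ ⟨0, left_mem_Icc.2 γ.len_nonneg, γ.len, right_mem_Icc.2 γ.len_nonneg, h⟩
    simp [UpperGradIneq, this]

theorem IsUpperGradient.ofReal_abs_sub_le {u : X → ℝ} {g : X → ℝ≥0∞} (hg : IsUpperGradient g u)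
    (γ : Curve X) (a b : ℝ) (ha : 0 ≤ a) (hab : a ≤ b) (hb : b ≤ γ.len) :
    ENNReal.ofReal |u (γ.toFun a) - u (γ.toFun b)| ≤ ∫⁻ s in Icc a b, g (γ.toFun s) := by
  rw [← curveLintegral_sub g γ a b ha hab hb]
  simpa [UpperGradIneq, Curve.sub] using hg.upperGradIneq (γ.sub a b ha hab hb)

theorem LocallyLipschitz.exists_lipschitzOnWith_curve {u : X → ℝ} (hu : LocallyLipschitz u)
    (γ : Curve X) : ∃ K, LipschitzOnWith K (fun s => u (γ.toFun s)) (Icc 0 γ.len) := by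
  obtain ⟨K, hK⟩ := LocallyLipschitzOn.exists_lipschitzOnWith_of_compact
    (isCompact_Icc.image_of_continuousOn γ.continuousOn) (hu.locallyLipschitzOn
      (s := γ.toFun '' Icc 0 γ.len))
  exact ⟨K * 1, hK.comp γ.lipschitzOn (mapsTo_image _ _)⟩

open scoped Classical in
/-- Gluing upper gradients: if `w` lies on one side of both `u` and `v`, coincides with `u` on `S`
and with `v` off `S`, then the glued gradient controls `w` up to an arbitrarily small multiple of
the sum of the gradients, which takes care of curves of infinite integral. -/
theorem isUpperGradient_piecewise {u v w : X → ℝ} (hu : LocallyLipschitz u)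
    (hv : LocallyLipschitz v) (hw : LocallyLipschitz w) {p q : X → ℝ≥0∞}
    (hp : IsUpperGradient p u) (hq : IsUpperGradient q v) {S : Set X} (hS : MeasurableSet S)
    (hwS : ∀ x ∈ S, w x = u x) (hwS' : ∀ x ∉ S, w x = v x)
    (hside : ((∀ x, w x ≤ u x) ∧ ∀ x, w x ≤ v x) ∨ ((∀ x, u x ≤ w x) ∧ ∀ x, v x ≤ w x))
    {ε : ℝ≥0∞} (hε : ε ≠ 0) :
    IsUpperGradient (fun x => S.piecewise p q x + ε * (p x + q x)) w := by
  have hpw : Measurable (S.piecewise p q) := Measurable.piecewise hS hp.1 hq.1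
  refine ⟨hpw.add ((hp.1.add hq.1).const_mul ε), fun γ _ => ?_⟩
  rw [UpperGradIneq, curveLintegral_add hpw, curveLintegral_const_mul (hp.1.fun_add hq.1)]
  by_cases hfin : curveLintegral (fun x => p x + q x) γ = ⊤
  · simp [hfin, ENNReal.mul_top hε]
  rw [curveLintegral_add hp.1, ENNReal.add_eq_top, not_or] at hfin
  refine le_trans ?_ le_self_add
  obtain ⟨K₁, h₁⟩ := hu.exists_lipschitzOnWith_curve γ
  obtain ⟨K₂, h₂⟩ := hv.exists_lipschitzOnWith_curve γ
  obtain ⟨K₃, h₃⟩ := hw.exists_lipschitzOnWith_curve γ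
  refine ofReal_abs_sub_le_lintegral_of_isLocalExtr γ.len_nonneg h₁ h₂ h₃
    (hp.1.comp_aemeasurable γ.aemeasurable) hfin.1 (hp.ofReal_abs_sub_le γ)
    (hq.1.comp_aemeasurable γ.aemeasurable) hfin.2 (hq.ofReal_abs_sub_le γ) fun t _ => ?_
  by_cases ht : γ.toFun t ∈ S
  · refine Or.inl ⟨?_, by simp [ht]⟩
    rcases hside with h | h
    · exact Or.inl (Eventually.of_forall fun s => by
        simpa [hwS _ ht] using h.1 (γ.toFun s))
    · exact Or.inr (Eventually.of_forall fun s => by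
        simpa [hwS _ ht] using h.1 (γ.toFun s))
  · refine Or.inr ⟨?_, by simp [ht]⟩
    rcases hside with h | h
    · exact Or.inl (Eventually.of_forall fun s => by
        simpa [hwS' _ ht] using h.2 (γ.toFun s))
    · exact Or.inr (Eventually.of_forall fun s => by
        simpa [hwS' _ ht] using h.2 (γ.toFun s))

theorem gradEnergy_min_add_gradEnergy_max_le (μ : Measure X) {u v : X → ℝ}
    (hu : LocallyLipschitz u) (hv : LocallyLipschitz v) :
    gradEnergy μ (fun x => min (u x) (v x)) univ + gradEnergy μ (fun x => max (u x) (v x)) univ ≤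
      gradEnergy μ u univ + gradEnergy μ v univ := by
  classical
  refine ENNReal.le_of_forall_pos_le_add fun δ hδ hfin => ?_
  rw [ENNReal.add_lt_top] at hfin
  have hδ' : (δ / 2 : ℝ≥0∞) ≠ 0 := by simp [hδ.ne']
  obtain ⟨p, hp, hpl⟩ := exists_isUpperGradient_lintegral_lt (ENNReal.lt_add_right hfin.1.ne hδ')
  obtain ⟨q, hq, hql⟩ := exists_isUpperGradient_lintegral_lt (ENNReal.lt_add_right hfin.2.ne hδ')
  set A := ∫⁻ x, p x + q x ∂μ with hA
  have hAlt : A ≤ gradEnergy μ u univ + gradEnergy μ v univ + δ := by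
    rw [hA, lintegral_add_left hp.1]
    refine (add_le_add hpl.le hql.le).trans_eq ?_
    rw [add_add_add_comm, ENNReal.add_halves]
  have hAfin : A ≠ ⊤ := ne_top_of_le_ne_top
    (ENNReal.add_ne_top.2 ⟨(ENNReal.add_lt_top.2 hfin).ne, ENNReal.coe_ne_top⟩) hAlt
  refine le_trans ?_ hAlt
  set S := {x | u x ≤ v x}
  have hS : MeasurableSet S := (isClosed_le hu.continuous hv.continuous).measurableSet
  have hbound : ∀ n : ℕ, gradEnergy μ (fun x => min (u x) (v x)) univ +
      gradEnergy μ (fun x => max (u x) (v x)) univ ≤ A + ((n : ℝ≥0∞)⁻¹ * A + (n : ℝ≥0∞)⁻¹ * A) := by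
    intro n
    have hn : (n : ℝ≥0∞)⁻¹ ≠ 0 := by simp
    have h1 := gradEnergy_le_of_isUpperGradient (μ := μ) (isUpperGradient_piecewise hu hv
      (hu.min hv) hp hq hS (fun x hx => min_eq_left hx)
      (fun x hx => min_eq_right (not_le.1 hx).le)
      (Or.inl ⟨fun x => min_le_left _ _, fun x => min_le_right _ _⟩) hn)
    have h2 := gradEnergy_le_of_isUpperGradient (μ := μ) (isUpperGradient_piecewise hv hu
      (hu.max hv) hq hp hS (fun x hx => max_eq_right hx)
      (fun x hx => max_eq_left (not_le.1 hx).le)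
      (Or.inr ⟨fun x => le_max_right _ _, fun x => le_max_left _ _⟩) hn)
    refine (add_le_add h1 h2).trans_eq ?_
    have hpq : Measurable (S.piecewise p q) := Measurable.piecewise hS hp.1 hq.1
    have hqp : Measurable (S.piecewise q p) := Measurable.piecewise hS hq.1 hp.1
    rw [lintegral_add_left hpq, lintegral_add_left hqp, add_add_add_comm,
      ← lintegral_add_left hpq, lintegral_const_mul _ (hp.1.fun_add hq.1),
      lintegral_const_mul _ (hq.1.fun_add hp.1)]
    have e1 : ∫⁻ x, q x + p x ∂μ = A := by simp only [hA, add_comm]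
    have e2 : ∫⁻ x, S.piecewise p q x + S.piecewise q p x ∂μ = A := by
      refine lintegral_congr fun x => ?_
      by_cases hx : x ∈ S <;> simp [hx, add_comm]
    rw [e1, e2]
  have hlim : Tendsto (fun n : ℕ => A + ((n : ℝ≥0∞)⁻¹ * A + (n : ℝ≥0∞)⁻¹ * A)) atTop (𝓝 A) := by
    have h0 : Tendsto (fun n : ℕ => (n : ℝ≥0∞)⁻¹ * A) atTop (𝓝 0) := by
      simpa using ENNReal.Tendsto.mul_const ENNReal.tendsto_inv_nat_nhds_zero (Or.inr hAfin)
    simpa using tendsto_const_nhds.add (h0.add h0)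
  exact ge_of_tendsto' hlim hbound

theorem gradEnergy_one_sub_le (μ : Measure X) (u : X → ℝ) :
    gradEnergy μ (fun x => 1 - u x) univ ≤ gradEnergy μ u univ := by
  refine le_of_forall_gt fun c hc => ?_
  obtain ⟨g, hg, hlt⟩ := exists_isUpperGradient_lintegral_lt hc
  refine (gradEnergy_le_of_isUpperGradient ⟨hg.1, fun γ hγ => ?_⟩).trans_lt hlt
  have := hg.2 γ hγ
  rwa [UpperGradIneq, abs_sub_comm, ← sub_sub_sub_cancel_left _ _ (1 : ℝ)] at this

end UpperGradient

section TotalVariation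

variable {μ : Measure X}

theorem perimeter_univ (A : Set X) :
    perimeter μ A univ = variationOn μ (A.indicator fun _ => (1 : ℝ)) univ := by
  refine le_antisymm (iInf₂_le univ ⟨isOpen_univ, Subset.rfl⟩) (le_iInf₂ fun W hW => ?_)
  rw [univ_subset_iff.1 hW.2]

theorem locLipschitzOn_univ {u : X → ℝ} : LocLipschitzOn u univ ↔ LocallyLipschitz u := by
  simp [LocLipschitzOn, LocallyLipschitz, nhdsWithin_univ]

theorem tendstoL1loc_univ [ProperSpace X] (x₀ : X) {u : ℕ → X → ℝ} {v : X → ℝ} :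
    TendstoL1loc μ univ u v ↔ ∀ n : ℕ,
      Tendsto (fun i => ∫⁻ x in ball x₀ n, ENNReal.ofReal |u i x - v x| ∂μ) atTop (𝓝 0) := by
  refine ⟨fun h n => h _ isOpen_ball
    ((isCompact_closedBall x₀ n).of_isClosed_subset isClosed_closure closure_ball_subset_closedBall)
    (subset_univ _), fun h W _ hc _ => ?_⟩
  obtain ⟨r, hr⟩ := hc.isBounded.subset_ball x₀
  obtain ⟨n, hn⟩ := exists_nat_ge r
  exact tendsto_of_tendsto_of_tendsto_of_le_of_le tendsto_const_nhds (h n) (fun _ => bot_le)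
    fun i => lintegral_mono_set (subset_closure.trans (hr.trans (ball_subset_ball hn)))

theorem exists_locallyLipschitz_of_variationOn_lt [ProperSpace X] (x₀ : X) {v : X → ℝ} {c : ℝ≥0∞}
    (h : variationOn μ v univ < c) (n : ℕ) {δ : ℝ≥0∞} (hδ : 0 < δ) :
    ∃ u : X → ℝ, LocallyLipschitz u ∧ gradEnergy μ u univ < c ∧
      ∫⁻ x in ball x₀ n, ENNReal.ofReal |u x - v x| ∂μ < δ := by
  simp only [variationOn, iInf_lt_iff, exists_prop] at h
  obtain ⟨u, ⟨hu, huv⟩, hlt⟩ := h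
  obtain ⟨i, h1, h2⟩ := ((frequently_lt_of_liminf_lt (by isBoundedDefault) hlt).and_eventually
    (((tendstoL1loc_univ x₀).1 huv n).eventually_lt_const hδ)).exists
  exact ⟨u i, locLipschitzOn_univ.1 (hu i), h1, h2⟩

theorem variationOn_le_liminf [ProperSpace X] (x₀ : X) {v : X → ℝ} {u : ℕ → X → ℝ}
    (hu : ∀ i, LocallyLipschitz (u i)) {δ : ℕ → ℝ≥0∞} (hδ : Tendsto δ atTop (𝓝 0))
    (huv : ∀ i : ℕ, ∫⁻ x in ball x₀ i, ENNReal.ofReal |u i x - v x| ∂μ ≤ δ i) :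
    variationOn μ v univ ≤ liminf (fun i => gradEnergy μ (u i) univ) atTop := by
  refine iInf₂_le u ⟨fun i => locLipschitzOn_univ.2 (hu i), (tendstoL1loc_univ x₀).2 fun n => ?_⟩
  refine tendsto_of_tendsto_of_tendsto_of_le_of_le' tendsto_const_nhds hδ
    (Eventually.of_forall fun _ => bot_le) ?_
  filter_upwards [eventually_ge_atTop n] with i hi
  exact (lintegral_mono_set (ball_subset_ball (by exact_mod_cast hi))).trans (huv i)

theorem tendsto_inv_nat_add_one : Tendsto (fun n : ℕ => ((n + 1 : ℕ) : ℝ≥0∞)⁻¹) atTop (𝓝 0) :=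
  ENNReal.tendsto_inv_nat_nhds_zero.comp (tendsto_add_atTop_nat 1)

theorem variationOn_congr_ae {v w : X → ℝ} (h : v =ᵐ[μ] w) :
    variationOn μ v univ = variationOn μ w univ := by
  have key : ∀ u : ℕ → X → ℝ, TendstoL1loc μ univ u v ↔ TendstoL1loc μ univ u w := fun u => by
    have : ∀ (W : Set X) (i : ℕ), ∫⁻ x in W, ENNReal.ofReal |u i x - v x| ∂μ =
        ∫⁻ x in W, ENNReal.ofReal |u i x - w x| ∂μ := fun W i =>
      lintegral_congr_ae (ae_restrict_of_ae (h.mono fun x hx => by simp only [hx]))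
    simp only [TendstoL1loc, this]
  simp only [variationOn, key]

theorem perimeter_congr_ae {A B : Set X} (h : A =ᵐ[μ] B) :
    perimeter μ A univ = perimeter μ B univ := by
  rw [perimeter_univ, perimeter_univ]
  exact variationOn_congr_ae (indicator_ae_eq_of_ae_eq_set h)

theorem variationOn_le_of_approx [ProperSpace X] (x₀ : X) {v : X → ℝ}
    {c : ℝ≥0∞}
    (h : ∀ n : ℕ, ∀ δ : ℝ≥0∞, 0 < δ → ∃ w : X → ℝ, Measurable w ∧ variationOn μ w univ ≤ c ∧
      ∫⁻ x in ball x₀ n, ENNReal.ofReal |w x - v x| ∂μ ≤ δ) :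
    variationOn μ v univ ≤ c := by
  rcases eq_or_ne c ⊤ with rfl | hc
  · exact le_top
  have hpos : ∀ n : ℕ, 0 < ((n + 1 : ℕ) : ℝ≥0∞)⁻¹ := fun n =>
    ENNReal.inv_pos.2 (ENNReal.natCast_ne_top _)
  choose w hwm hwc hwv using fun n : ℕ => h n _ (hpos n)
  choose u hu hue huw using fun n : ℕ => exists_locallyLipschitz_of_variationOn_lt x₀
    ((hwc n).trans_lt (ENNReal.lt_add_right hc (hpos n).ne')) n (hpos n)
  have hlim := tendsto_inv_nat_add_one
  have h2 : Tendsto (fun n : ℕ => ((n + 1 : ℕ) : ℝ≥0∞)⁻¹ + ((n + 1 : ℕ) : ℝ≥0∞)⁻¹) atTop (𝓝 0) := by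
    simpa using hlim.add hlim
  refine (variationOn_le_liminf x₀ hu h2 fun n => ?_).trans ?_
  · refine le_trans ?_ (add_le_add (huw n).le (hwv n))
    rw [← lintegral_add_left]
    · refine lintegral_mono fun x => ?_
      rw [← ENNReal.ofReal_add (abs_nonneg _) (abs_nonneg _)]
      exact ENNReal.ofReal_le_ofReal (abs_sub_le _ _ _)
    · exact ((hu n).continuous.measurable.sub (hwm n)).abs.ennreal_ofReal
  · have h3 : Tendsto (fun n : ℕ => c + ((n + 1 : ℕ) : ℝ≥0∞)⁻¹) atTop (𝓝 c) := by
      simpa using tendsto_const_nhds.add hlim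
    rw [← h3.liminf_eq]
    exact liminf_le_liminf (Eventually.of_forall fun n => (hue n).le)

theorem perimeter_inter_add_perimeter_union_le [ProperSpace X] {A B : Set X}
    (hA : MeasurableSet A) (hB : MeasurableSet B) :
    perimeter μ (A ∩ B) univ + perimeter μ (A ∪ B) univ ≤
      perimeter μ A univ + perimeter μ B univ := by
  rcases isEmpty_or_nonempty X with hX | ⟨⟨x₀⟩⟩
  · simp [Subsingleton.elim (A ∩ B) A, Subsingleton.elim (A ∪ B) B]
  simp only [perimeter_univ]
  set f : X → ℝ := A.indicator fun _ => (1 : ℝ) with hf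
  set g : X → ℝ := B.indicator fun _ => (1 : ℝ) with hg
  rcases eq_or_ne (variationOn μ f univ) ⊤ with h | hfA
  · simp [h]
  rcases eq_or_ne (variationOn μ g univ) ⊤ with h | hgB
  · simp [h]
  have hfm : Measurable f := measurable_const.indicator hA
  have hgm : Measurable g := measurable_const.indicator hB
  have hmin : (A ∩ B).indicator (fun _ => (1 : ℝ)) = fun x => min (f x) (g x) := by
    ext x
    by_cases ha : x ∈ A <;> by_cases hb : x ∈ B <;> simp [hf, hg, ha, hb]
  have hmax : (A ∪ B).indicator (fun _ => (1 : ℝ)) = fun x => max (f x) (g x) := by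
    ext x
    by_cases ha : x ∈ A <;> by_cases hb : x ∈ B <;> simp [hf, hg, ha, hb]
  have hpos : ∀ n : ℕ, 0 < ((n + 1 : ℕ) : ℝ≥0∞)⁻¹ := fun n =>
    ENNReal.inv_pos.2 (ENNReal.natCast_ne_top _)
  choose u hu hue huf using fun n : ℕ => exists_locallyLipschitz_of_variationOn_lt x₀
    (ENNReal.lt_add_right hfA (hpos n).ne') n (hpos n)
  choose v hv hve hvg using fun n : ℕ => exists_locallyLipschitz_of_variationOn_lt x₀
    (ENNReal.lt_add_right hgB (hpos n).ne') n (hpos n)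
  have hlim := tendsto_inv_nat_add_one
  have h2 : Tendsto (fun n : ℕ => ((n + 1 : ℕ) : ℝ≥0∞)⁻¹ + ((n + 1 : ℕ) : ℝ≥0∞)⁻¹) atTop (𝓝 0) := by
    simpa using hlim.add hlim
  have hsum : ∀ n : ℕ, ∫⁻ x in ball x₀ n,
      (ENNReal.ofReal |u n x - f x| + ENNReal.ofReal |v n x - g x|) ∂μ ≤
        ((n + 1 : ℕ) : ℝ≥0∞)⁻¹ + ((n + 1 : ℕ) : ℝ≥0∞)⁻¹ := fun n => by
    rw [lintegral_add_left ((hu n).continuous.measurable.fun_sub hfm).abs.ennreal_ofReal]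
    exact add_le_add (huf n).le (hvg n).le
  have hm := variationOn_le_liminf (μ := μ) (v := (A ∩ B).indicator fun _ => (1 : ℝ)) x₀
    (fun n => (hu n).min (hv n)) h2 fun n => by
      refine le_trans (lintegral_mono fun x => ?_) (hsum n)
      rw [hmin, ← ENNReal.ofReal_add (abs_nonneg _) (abs_nonneg _)]
      exact ENNReal.ofReal_le_ofReal ((abs_min_sub_min_le_max _ _ _ _).trans
        (max_le_add_of_nonneg (abs_nonneg _) (abs_nonneg _)))
  have hM := variationOn_le_liminf (μ := μ) (v := (A ∪ B).indicator fun _ => (1 : ℝ)) x₀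
    (fun n => (hu n).max (hv n)) h2 fun n => by
      refine le_trans (lintegral_mono fun x => ?_) (hsum n)
      rw [hmax, ← ENNReal.ofReal_add (abs_nonneg _) (abs_nonneg _)]
      exact ENNReal.ofReal_le_ofReal ((abs_max_sub_max_le_max _ _ _ _).trans
        (max_le_add_of_nonneg (abs_nonneg _) (abs_nonneg _)))
  refine (add_le_add hm hM).trans ?_
  have h3 : Tendsto (fun n : ℕ => variationOn μ f univ + variationOn μ g univ +
      (((n + 1 : ℕ) : ℝ≥0∞)⁻¹ + ((n + 1 : ℕ) : ℝ≥0∞)⁻¹)) atTop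
      (𝓝 (variationOn μ f univ + variationOn μ g univ)) := by
    simpa using tendsto_const_nhds.add h2
  rw [liminf_eq_iSup_iInf_of_nat, liminf_eq_iSup_iInf_of_nat]
  refine ENNReal.iSup_add_iSup_le fun i j => ge_of_tendsto h3 ?_
  filter_upwards [eventually_ge_atTop i, eventually_ge_atTop j] with n hi hj
  exact (add_le_add (iInf₂_le n hi) (iInf₂_le n hj)).trans
    ((gradEnergy_min_add_gradEnergy_max_le μ (hu n) (hv n)).trans
      ((add_le_add (hue n).le (hve n).le).trans_eq (add_add_add_comm _ _ _ _)))

theorem perimeter_empty : perimeter μ (∅ : Set X) univ = 0 := by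
  rw [perimeter_univ, indicator_empty, ← nonpos_iff_eq_zero]
  have h0 : gradEnergy μ (fun _ : X => (0 : ℝ)) univ = 0 :=
    le_antisymm ((gradEnergy_le_of_isUpperGradient (g := fun _ => 0)
      ⟨measurable_const, fun γ _ => by simp [UpperGradIneq]⟩).trans (by simp)) bot_le
  refine (iInf₂_le (fun _ _ => 0) ⟨fun _ => locLipschitzOn_univ.2 (LocallyLipschitz.const 0), ?_⟩).trans
    (by simp [h0])
  intro W _ _ _
  simp

theorem perimeter_compl_le (A : Set X) : perimeter μ Aᶜ univ ≤ perimeter μ A univ := by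
  rw [perimeter_univ, perimeter_univ]
  refine le_iInf₂ fun u hu => (iInf₂_le (fun i x => 1 - u i x) ⟨fun i => ?_, ?_⟩).trans
    (liminf_le_liminf (Eventually.of_forall fun i => gradEnergy_one_sub_le μ (u i)))
  · intro x hx
    obtain ⟨K, t, ht, hK⟩ := hu.1 i x hx
    refine ⟨K, t, ht, fun y hy z hz => ?_⟩
    rw [edist_sub_left]
    exact hK hy hz
  · intro W h1 h2 h3
    refine (hu.2 W h1 h2 h3).congr fun i => lintegral_congr fun x => ?_
    rw [← abs_neg]
    congr 2
    by_cases hx : x ∈ A <;> simp [hx]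

theorem perimeter_compl (A : Set X) : perimeter μ Aᶜ univ = perimeter μ A univ :=
  le_antisymm (perimeter_compl_le A) (by simpa using perimeter_compl_le (μ := μ) Aᶜ)

theorem perimeter_union_le [ProperSpace X] {A B : Set X}
    (hA : MeasurableSet A) (hB : MeasurableSet B) :
    perimeter μ (A ∪ B) univ ≤ perimeter μ A univ + perimeter μ B univ :=
  le_add_self.trans (perimeter_inter_add_perimeter_union_le hA hB)

theorem perimeter_biUnion_lt_le [ProperSpace X] {A : ℕ → Set X} (hA : ∀ n, MeasurableSet (A n))
    (n : ℕ) :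
    perimeter μ (⋃ k < n, A k) univ ≤ ∑ k ∈ Finset.range n, perimeter μ (A k) univ := by
  induction n with
  | zero => simp [perimeter_empty]
  | succ n ih =>
    rw [biUnion_lt_succ, Finset.sum_range_succ]
    refine (perimeter_union_le (MeasurableSet.biUnion (to_countable _) fun k _ => hA k)
      (hA n)).trans (add_le_add_left ih _)

theorem perimeter_iUnion_le [ProperSpace X] (hfin : ∀ (x : X) (r : ℝ), μ (ball x r) < ⊤)
    {A : ℕ → Set X} (hA : ∀ n, MeasurableSet (A n)) :
    perimeter μ (⋃ n, A n) univ ≤ ∑' n, perimeter μ (A n) univ := by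
  rcases isEmpty_or_nonempty X with hX | ⟨⟨x₀⟩⟩
  · simp [Subsingleton.elim (⋃ n, A n) ∅, perimeter_empty]
  have hU : MeasurableSet (⋃ n, A n) := MeasurableSet.iUnion hA
  have hB : ∀ N, MeasurableSet (⋃ k < N, A k) := fun N =>
    MeasurableSet.biUnion (to_countable _) fun k _ => hA k
  rw [perimeter_univ]
  refine variationOn_le_of_approx x₀ fun n δ hδ => ?_
  have hlim : Tendsto (fun N => μ (ball x₀ n ∩ ((⋃ k, A k) \ ⋃ k < N, A k))) atTop (𝓝 0) := by
    have hI : (⋂ N, ball x₀ n ∩ ((⋃ k, A k) \ ⋃ k < N, A k)) = ∅ := by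
      refine eq_empty_of_forall_notMem fun x hx => ?_
      rw [mem_iInter] at hx
      obtain ⟨k, hk⟩ := mem_iUnion.1 (hx 0).2.1
      exact (hx (k + 1)).2.2 (mem_biUnion (Nat.lt_succ_self k) hk)
    rw [← measure_empty (μ := μ), ← hI]
    refine tendsto_measure_iInter_atTop
      (fun N => (measurableSet_ball.inter (hU.diff (hB N))).nullMeasurableSet) ?_
      ⟨0, ((measure_mono inter_subset_left).trans_lt (hfin x₀ n)).ne⟩
    intro N M hNM
    exact inter_subset_inter_right _ (sdiff_subset_sdiff_right
      (biUnion_subset_biUnion_left fun k hk => lt_of_lt_of_le hk hNM))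
  obtain ⟨N, hN⟩ := (hlim.eventually_lt_const hδ).exists
  refine ⟨(⋃ k < N, A k).indicator fun _ => 1, measurable_const.indicator (hB N), ?_, ?_⟩
  · rw [← perimeter_univ]
    exact (perimeter_biUnion_lt_le hA N).trans (ENNReal.sum_le_tsum _)
  · refine le_trans (le_of_eq ?_) hN.le
    have hD : MeasurableSet ((⋃ k, A k) \ ⋃ k < N, A k) := hU.diff (hB N)
    rw [inter_comm, ← Measure.restrict_apply hD, ← lintegral_indicator_one hD]
    refine lintegral_congr fun x => ?_
    have hsub : x ∈ (⋃ k < N, A k) → x ∈ ⋃ k, A k := fun h => by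
      obtain ⟨k, -, hk⟩ := mem_iUnion₂.1 h
      exact mem_iUnion.2 ⟨k, hk⟩
    by_cases h1 : x ∈ ⋃ k < N, A k
    · rw [indicator_of_mem h1, indicator_of_mem (hsub h1), indicator_of_notMem fun h => h.2 h1]
      simp
    · by_cases h2 : x ∈ ⋃ k, A k
      · rw [indicator_of_notMem h1, indicator_of_mem h2, indicator_of_mem (mem_sdiff_of_mem h2 h1)]
        simp
      · rw [indicator_of_notMem h1, indicator_of_notMem h2, indicator_of_notMem fun h => h2 h.1]
        simp

end TotalVariation

section Poincare

variable {μ : Measure X}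

theorem min_measure_le_lintegral_abs_indicator_sub {A B : Set X} (hA : MeasurableSet A)
    (c : ℝ) :
    min (μ (A ∩ B)) (μ (Aᶜ ∩ B)) ≤
      ∫⁻ x in B, ENNReal.ofReal |A.indicator (fun _ => (1 : ℝ)) x - c| ∂μ := by
  have h1 : ∫⁻ x in A, ENNReal.ofReal |A.indicator (fun _ => (1 : ℝ)) x - c| ∂(μ.restrict B) =
      ENNReal.ofReal |1 - c| * μ (A ∩ B) := by
    rw [setLIntegral_congr_fun (g := fun _ => ENNReal.ofReal |1 - c|) hA
      fun x hx => by simp [hx], setLIntegral_const, Measure.restrict_apply hA]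
  have h2 : ∫⁻ x in Aᶜ, ENNReal.ofReal |A.indicator (fun _ => (1 : ℝ)) x - c| ∂(μ.restrict B) =
      ENNReal.ofReal |c| * μ (Aᶜ ∩ B) := by
    rw [setLIntegral_congr_fun (g := fun _ => ENNReal.ofReal |c|) hA.compl
      fun x hx => by simp [indicator_of_notMem hx], setLIntegral_const,
      Measure.restrict_apply hA.compl]
  rw [← lintegral_add_compl _ hA, h1, h2]
  have hone : (1 : ℝ≥0∞) ≤ ENNReal.ofReal |1 - c| + ENNReal.ofReal |c| := by
    rw [← ENNReal.ofReal_add (abs_nonneg _) (abs_nonneg _), ← ENNReal.ofReal_one]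
    refine ENNReal.ofReal_le_ofReal ?_
    linarith [le_abs_self (1 - c), le_abs_self c]
  calc min (μ (A ∩ B)) (μ (Aᶜ ∩ B))
      ≤ (ENNReal.ofReal |1 - c| + ENNReal.ofReal |c|) * min (μ (A ∩ B)) (μ (Aᶜ ∩ B)) := by
        simpa using mul_le_mul_left hone (min (μ (A ∩ B)) (μ (Aᶜ ∩ B)))
    _ ≤ _ := by
        rw [add_mul]
        gcongr
        · exact min_le_left _ _
        · exact min_le_right _ _

theorem min_measure_ball_eq_zero_of_perimeter_eq_zero [ProperSpace X]
    (hball : ∀ (x : X) (r : ℝ), 0 < r → 0 < μ (ball x r) ∧ μ (ball x r) < ⊤)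
    (hP : SupportsPoincare μ) {A : Set X} (hA : MeasurableSet A) (h0 : perimeter μ A univ = 0)
    (x₀ : X) {r : ℝ} (hr : 0 < r) :
    min (μ (A ∩ ball x₀ r)) (μ (Aᶜ ∩ ball x₀ r)) = 0 := by
  obtain ⟨C, lam, hC, hlam, hP⟩ := hP
  have hfc : IsFiniteMeasureOnCompacts μ := ⟨fun K hK => by
    obtain ⟨R, hR⟩ := hK.isBounded.subset_ball x₀
    exact (measure_mono (hR.trans (ball_subset_ball (le_max_left R 1)))).trans_lt
      (hball x₀ _ (lt_max_of_lt_right one_pos)).2⟩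
  obtain ⟨N, hN⟩ := exists_nat_ge r
  have hbig := hball x₀ (lam * r) (by positivity)
  have hbound : ∀ n : ℕ, min (μ (A ∩ ball x₀ r)) (μ (Aᶜ ∩ ball x₀ r)) ≤
      ((n + 1 : ℕ) : ℝ≥0∞)⁻¹ + ENNReal.ofReal (C * r) * ((n + 1 : ℕ) : ℝ≥0∞)⁻¹ := by
    intro n
    have hpos : 0 < ((n + 1 : ℕ) : ℝ≥0∞)⁻¹ := ENNReal.inv_pos.2 (ENNReal.natCast_ne_top _)
    rw [perimeter_univ] at h0
    obtain ⟨u, hu, hue, huA⟩ := exists_locallyLipschitz_of_variationOn_lt x₀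
      (h0.trans_lt hpos) N hpos
    obtain ⟨g, hg, hgl⟩ := exists_isUpperGradient_lintegral_lt hue
    have hpoin := hP x₀ r hr u g (fun y s =>
      (hu.continuous.continuousOn.integrableOn_compact (isCompact_closedBall y s)).mono_set
        ball_subset_closedBall) hg
    set c := ⨍ z in ball x₀ r, u z ∂μ
    have hosc : ∫⁻ y in ball x₀ r, ENNReal.ofReal |u y - c| ∂μ ≤
        ENNReal.ofReal (C * r) * ((n + 1 : ℕ) : ℝ≥0∞)⁻¹ := by
      refine (ENNReal.mul_le_mul_iff_right hbig.1.ne' hbig.2.ne).1 (hpoin.trans ?_)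
      rw [mul_comm (ENNReal.ofReal (C * r)), mul_assoc]
      gcongr
      · nlinarith
      · exact (setLIntegral_le_lintegral _ _).trans hgl.le
    refine (min_measure_le_lintegral_abs_indicator_sub hA c).trans
      (le_trans ?_ (add_le_add huA.le hosc))
    refine le_trans ?_ (add_le_add_left (lintegral_mono_set (ball_subset_ball hN)) _)
    have hm : Measurable (A.indicator fun _ => (1 : ℝ)) := measurable_const.indicator hA
    rw [← lintegral_add_left (hu.continuous.measurable.fun_sub hm).abs.ennreal_ofReal]
    refine lintegral_mono fun x => ?_
    rw [← ENNReal.ofReal_add (abs_nonneg _) (abs_nonneg _), abs_sub_comm (u x)]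
    exact ENNReal.ofReal_le_ofReal (abs_sub_le _ _ _)
  have hlim : Tendsto (fun n : ℕ => ((n + 1 : ℕ) : ℝ≥0∞)⁻¹ +
      ENNReal.ofReal (C * r) * ((n + 1 : ℕ) : ℝ≥0∞)⁻¹) atTop (𝓝 0) := by
    simpa using tendsto_inv_nat_add_one.add
      (ENNReal.Tendsto.const_mul tendsto_inv_nat_add_one (Or.inr ENNReal.ofReal_ne_top))
  exact le_antisymm (ge_of_tendsto' hlim hbound) bot_le

theorem measure_eq_zero_or_measure_compl_eq_zero_of_perimeter_eq_zero [ProperSpace X]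
    (hball : ∀ (x : X) (r : ℝ), 0 < r → 0 < μ (ball x r) ∧ μ (ball x r) < ⊤)
    (hP : SupportsPoincare μ) {A : Set X} (hA : MeasurableSet A)
    (h0 : perimeter μ A univ = 0) : μ A = 0 ∨ μ Aᶜ = 0 := by
  rcases isEmpty_or_nonempty X with hX | ⟨⟨x₀⟩⟩
  · simp [Subsingleton.elim A ∅]
  by_contra hne
  rw [not_or] at hne
  have hex : ∀ S : Set X, μ S ≠ 0 → ∃ n : ℕ, μ (S ∩ ball x₀ n) ≠ 0 := fun S hS => by
    by_contra hn
    push Not at hn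
    refine hS (measure_mono_null ?_ (measure_iUnion_null hn))
    rw [← inter_iUnion, iUnion_ball_nat, inter_univ]
  obtain ⟨n, hn⟩ := hex A hne.1
  obtain ⟨m, hm⟩ := hex Aᶜ hne.2
  have hr : (0 : ℝ) < n + m + 1 := by positivity
  have hz := min_measure_ball_eq_zero_of_perimeter_eq_zero hball hP hA h0 x₀ hr
  have hn' : (n : ℝ) ≤ n + m + 1 := by linarith [(Nat.cast_nonneg m : (0 : ℝ) ≤ m)]
  have hm' : (m : ℝ) ≤ n + m + 1 := by linarith [(Nat.cast_nonneg n : (0 : ℝ) ≤ n)]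
  rcases min_eq_bot.1 hz with h | h
  · exact hn (measure_mono_null (inter_subset_inter_right _ (ball_subset_ball hn')) h)
  · exact hm (measure_mono_null (inter_subset_inter_right _ (ball_subset_ball hm')) h)

end Poincare

section Decomposition

variable {μ : Measure X} [ProperSpace X]

/-- A splitting of `F` without loss of perimeter splits every subset of `F` in the same way. -/
theorem perimeter_inter_add_perimeter_inter_le {F H₁ H₂ S : Set X} (h₁ : MeasurableSet H₁)
    (h₂ : MeasurableSet H₂) (hS : MeasurableSet S) (hdisj : Disjoint H₁ H₂) (hF : H₁ ∪ H₂ = F)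
    (hSF : S ⊆ F) (hfin : perimeter μ F univ < ⊤)
    (hadd : perimeter μ H₁ univ + perimeter μ H₂ univ ≤ perimeter μ F univ) :
    perimeter μ (S ∩ H₁) univ + perimeter μ (S ∩ H₂) univ ≤ perimeter μ S univ := by
  rcases eq_or_ne (perimeter μ S univ) ⊤ with hStop | hStop
  · simp [hStop]
  have s1 := perimeter_inter_add_perimeter_union_le (μ := μ) hS h₁
  have s2 := perimeter_inter_add_perimeter_union_le (μ := μ) (hS.union h₁) h₂
  have e1 : (S ∪ H₁) ∩ H₂ = S ∩ H₂ := by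
    rw [union_inter_distrib_right, hdisj.inter_eq, union_empty]
  have e2 : S ∪ H₁ ∪ H₂ = F := by rw [union_assoc, hF, union_eq_right.2 hSF]
  rw [e1, e2] at s2
  have hH₁ : perimeter μ H₁ univ ≠ ⊤ := (le_self_add.trans hadd).trans_lt hfin |>.ne
  have hU : perimeter μ (S ∪ H₁) univ ≠ ⊤ :=
    ne_top_of_le_ne_top (ENNReal.add_ne_top.2 ⟨hStop, hH₁⟩) (le_add_self.trans s1)
  refine (ENNReal.add_le_add_iff_right (ENNReal.add_ne_top.2 ⟨hU, hfin.ne⟩)).1 ?_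
  calc _ = (perimeter μ (S ∩ H₁) univ + perimeter μ (S ∪ H₁) univ) +
        (perimeter μ (S ∩ H₂) univ + perimeter μ F univ) := by ring
    _ ≤ _ := add_le_add s1 s2
    _ = perimeter μ S univ + (perimeter μ (S ∪ H₁) univ +
        (perimeter μ H₁ univ + perimeter μ H₂ univ)) := by ring
    _ ≤ _ := by gcongr

theorem IsEssentialPartition.perimeter_add_perimeter_diff_le
    (hfin : ∀ (x : X) (r : ℝ), μ (ball x r) < ⊤) {S : Set X} {I : Set ℕ} {F : ℕ → Set X}
    (h : IsEssentialPartition μ S I F) {i : ℕ} (hi : i ∈ I) :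
    perimeter μ (F i) univ + perimeter μ (S \ F i) univ ≤ perimeter μ S univ := by
  classical
  obtain ⟨hm, hdisj, hU, -, -, -, hsum⟩ := h
  set A : ℕ → Set X := fun k => if k ∈ I ∧ k ≠ i then F k else ∅ with hA
  have hAm : ∀ k, MeasurableSet (A k) := fun k => by
    by_cases hk : k ∈ I ∧ k ≠ i
    · simpa [hA, hk] using hm k hk.1
    · simp [hA, hk]
  have hSU : S \ F i = ⋃ k, A k := by
    ext x
    simp only [← hU, Set.mem_sdiff, mem_iUnion, hA]
    constructor
    · rintro ⟨⟨k, hk, hx⟩, hxi⟩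
      have hki : k ≠ i := fun e => hxi (e ▸ hx)
      exact ⟨k, by simpa [hk, hki] using hx⟩
    · rintro ⟨k, hx⟩
      by_cases hk : k ∈ I ∧ k ≠ i
      · rw [if_pos hk] at hx
        exact ⟨⟨k, hk.1, hx⟩, disjoint_left.1 (hdisj k hk.1 i hi hk.2) hx⟩
      · simp [hk] at hx
  rw [hSU, hsum, tsum_subtype I fun k => perimeter μ (F k) univ, ENNReal.tsum_eq_add_tsum_ite i,
    indicator_of_mem hi]
  refine add_le_add_right ((perimeter_iUnion_le hfin hAm).trans_eq (tsum_congr fun k => ?_)) _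
  by_cases hk : k = i
  · simp [hA, hk, perimeter_empty]
  · by_cases hkI : k ∈ I <;> simp [hA, hk, hkI, perimeter_empty]

/-- If `G` splits off from `Eᶜ` without loss of perimeter, then a part of `Gᶜ` which splits off
without loss of perimeter and misses `E` has zero perimeter. -/
theorem perimeter_eq_zero_of_splits {E G A : Set X} (hE : MeasurableSet E) (hG : MeasurableSet G)
    (hA : MeasurableSet A) (hGE : G ⊆ Eᶜ) (hAG : A ⊆ Gᶜ) (hAE : μ (A ∩ E) = 0)
    (hEfin : perimeter μ Eᶜ univ < ⊤)
    (hsplitE : perimeter μ G univ + perimeter μ (Eᶜ \ G) univ ≤ perimeter μ Eᶜ univ)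
    (hsplitG : perimeter μ A univ + perimeter μ (Gᶜ \ A) univ ≤ perimeter μ Gᶜ univ) :
    perimeter μ A univ = 0 := by
  have hAae : (A \ E : Set X) =ᵐ[μ] A := sdiff_ae_eq_self.2 hAE
  have h := perimeter_inter_add_perimeter_inter_le (μ := μ) (S := G ∪ A \ E) hG (hE.compl.diff hG)
    (hG.union (hA.diff hE)) disjoint_sdiff_right (union_sdiff_cancel hGE)
    (union_subset hGE fun x hx => hx.2) hEfin hsplitE
  have e1 : (G ∪ A \ E) ∩ G = G := union_inter_cancel_left
  have e2 : (G ∪ A \ E) ∩ (Eᶜ \ G) = A \ E := by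
    ext x
    have : x ∈ A → x ∉ G := fun hx => hAG hx
    simp only [mem_inter_iff, mem_union, Set.mem_sdiff, mem_compl_iff]
    tauto
  have e3 : (Gᶜ \ A)ᶜ = G ∪ A := by
    ext x
    simp only [mem_union, Set.mem_sdiff, mem_compl_iff]
    tauto
  rw [e1, e2, perimeter_congr_ae hAae, perimeter_congr_ae (ae_eq_set_union (ae_eq_refl G) hAae),
    ← e3, perimeter_compl] at h
  rw [perimeter_compl] at hsplitG
  have hGfin : perimeter μ G univ ≠ ⊤ := ((le_self_add.trans hsplitE).trans_lt hEfin).ne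
  have hle : perimeter μ G univ + (perimeter μ A univ + perimeter μ A univ) ≤
      perimeter μ G univ + 0 := by
    calc _ = perimeter μ A univ + (perimeter μ G univ + perimeter μ A univ) := by ring
      _ ≤ _ := (add_le_add_right h _).trans hsplitG
      _ = _ := (add_zero _).symm
  have := (ENNReal.add_le_add_iff_left hGfin).1 hle
  exact (add_eq_zero.1 (le_antisymm this bot_le)).1

/-- An indecomposable subset of `F` lies, up to a null set, on one side of any splitting of `F`
without loss of perimeter. -/
theorem measure_inter_eq_zero_or_of_isIndecomposableIn {E F H : Set X} (hE : MeasurableSet E)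
    (hF : MeasurableSet F) (hH : MeasurableSet H) (hEF : E ⊆ F) (hHF : H ⊆ F)
    (hEfin : perimeter μ E univ < ⊤) (hFfin : perimeter μ F univ < ⊤)
    (hindec : IsIndecomposableIn μ E univ)
    (hsplit : perimeter μ H univ + perimeter μ (F \ H) univ ≤ perimeter μ F univ) :
    μ (E ∩ H) = 0 ∨ μ (E ∩ (F \ H)) = 0 := by
  by_contra hne
  rw [not_or] at hne
  have h := perimeter_inter_add_perimeter_inter_le (μ := μ) hH (hF.diff hH) hE
    disjoint_sdiff_right (union_sdiff_cancel hHF) hEF hFfin hsplit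
  have hU : E ∩ H ∪ E ∩ (F \ H) = E := by
    rw [← inter_union_distrib_left, union_sdiff_cancel hHF, inter_eq_left.2 hEF]
  have hm₁ := hE.inter hH
  have hm₂ := hE.inter (hF.diff hH)
  refine hindec ⟨E ∩ H, E ∩ (F \ H), hm₁, hm₂,
    disjoint_sdiff_right.mono inter_subset_right inter_subset_right, by rw [hU, inter_univ],
    (le_self_add.trans h).trans_lt hEfin, (le_add_self.trans h).trans_lt hEfin,
    pos_iff_ne_zero.2 hne.1, pos_iff_ne_zero.2 hne.2, le_antisymm ?_ h⟩
  have := perimeter_union_le (μ := μ) hm₁ hm₂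
  rwa [hU] at this

end Decomposition

/-- **Proposition (i).** In a PI space with `μ(X) = ∞`, any hole of an
indecomposable set `E` (i.e. any essential connected component of `X ∖ E` of
finite measure) is saturated. -/
theorem hole_is_saturated
    [ProperSpace X] (μ : Measure X)
    (hball : ∀ (x : X) (r : ℝ), 0 < r → 0 < μ (ball x r) ∧ μ (ball x r) < ⊤)
    (hPI : IsPISpace μ) (hinf : μ Set.univ = ⊤)
    (E : Set X) (hE : MeasurableSet E) (hEfin : perimeter μ E Set.univ < ⊤)
    (hindec : IsIndecomposableIn μ E Set.univ)
    (hcompfin : perimeter μ (Set.univ \ E) Set.univ < ⊤)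
    (I : Set ℕ) (G : ℕ → Set X)
    (hdec : IsEssentialPartition μ (Set.univ \ E) I G) :
    ∀ i ∈ I, μ (G i) < ⊤ →
      ∀ (J : Set ℕ) (H : ℕ → Set X),
        IsEssentialPartition μ (Set.univ \ G i) J H →
        μ (symmDiff (G i) (saturationOf μ (G i) J H)) = 0 := by
  have hfin : ∀ (x : X) (r : ℝ), μ (ball x r) < ⊤ := fun x r =>
    (measure_mono (ball_subset_ball (le_max_left r 1))).trans_lt
      (hball x _ (lt_max_of_lt_right one_pos)).2
  intro i hi hGfin J H hdecG
  have hGm : MeasurableSet (G i) := hdec.1 i hi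
  have hGE : G i ⊆ Eᶜ := by
    rw [compl_eq_univ_sdiff, ← hdec.2.2.1]
    exact subset_biUnion_of_mem hi
  have hsplitE := hdec.perimeter_add_perimeter_diff_le hfin hi
  rw [← compl_eq_univ_sdiff] at hsplitE hcompfin hdecG
  have hGPfin : perimeter μ (G i)ᶜ univ < ⊤ := by
    rw [perimeter_compl]
    exact hdec.2.2.2.2.1 i hi
  have htrivial : ∀ A : Set X, MeasurableSet A → perimeter μ A univ = 0 → μ A = 0 ∨ μ Aᶜ = 0 :=
    fun A hA h0 => measure_eq_zero_or_measure_compl_eq_zero_of_perimeter_eq_zero hball hPI.2.2 hA h0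
  have hinfinite : ∀ j ∈ J, ¬ μ (H j) < ⊤ := by
    intro j hj hHfin
    have hHm : MeasurableSet (H j) := hdecG.1 j hj
    have hHG : H j ⊆ (G i)ᶜ := by
      rw [← hdecG.2.2.1]
      exact subset_biUnion_of_mem hj
    have hRm : MeasurableSet ((G i)ᶜ \ H j) := hGm.compl.diff hHm
    have hsplitG := hdecG.perimeter_add_perimeter_diff_le hfin hj
    rcases measure_inter_eq_zero_or_of_isIndecomposableIn hE hGm.compl hHm
      (subset_compl_comm.1 hGE) hHG hEfin hGPfin hindec hsplitG with h | h
    · rw [inter_comm] at h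
      have h0 := perimeter_eq_zero_of_splits hE hGm hHm hGE hHG h hcompfin hsplitE hsplitG
      rcases htrivial _ hHm h0 with hz | hz
      · exact (hdecG.2.2.2.1 j hj).ne' hz
      · refine hinf.not_lt ?_
        rw [← measure_add_measure_compl hHm, hz, add_zero]
        exact hHfin
    · rw [inter_comm] at h
      have h0 := perimeter_eq_zero_of_splits hE hGm hRm hGE sdiff_subset h hcompfin hsplitE
        (by rwa [sdiff_sdiff_cancel_left hHG, add_comm])
      rcases htrivial _ hRm h0 with hz | hz
      · refine hinf.not_lt ?_
        rw [← measure_add_measure_compl hGm, ← union_sdiff_cancel hHG]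
        exact ENNReal.add_lt_top.2 ⟨hGfin, (measure_union_le _ _).trans_lt
          (ENNReal.add_lt_top.2 ⟨hHfin, hz ▸ ENNReal.zero_lt_top⟩)⟩
      · exact (hdec.2.2.2.1 i hi).ne'
          (measure_mono_null (show G i ⊆ ((G i)ᶜ \ H j)ᶜ from fun x hx hxR => hxR.1 hx) hz)
  have hsat : saturationOf μ (G i) J H = G i := by
    refine union_eq_left.2 (iUnion₂_subset fun j hj => ?_)
    exact (hinfinite j hj.1 hj.2).elim
  rw [hsat, symmDiff_self]
  exact measure_empty
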